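/- arXiv:1502.06507 — 4 statements merged into one kernel-verified Lean document; each statement's English description precedes it below -/
import Mathlib

section
/- For every real z with -1 < z < 1, the function G(z) = (z+1)·(12·Li₃((1+z)/2) − 6·ln((1+z)/2)·Li₂((1+z)/2) − π²·ln((1+z)/2) − 12·ζ(3)) has derivative G′(z) = 12·Li₃((1+z)/2) − 6·ln((1+z)/2)·Li₂((1+z)/2) − π²·ln((1+z)/2) − 12·ζ(3) − 6·Li₂((1−z)/2). -/
open Real

/-- The polylogarithm `Li s x = ∑_{k=1}^∞ x^k / k^s` for real `x` with `|x| < 1`. -/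
noncomputable def Li (s : ℕ) (x : ℝ) : ℝ := ∑' k : ℕ, x ^ (k + 1) / ((k : ℝ) + 1) ^ s

/-- `ζ(3) = ∑_{k=1}^∞ 1/k³`. -/
noncomputable def zeta3 : ℝ := ∑' k : ℕ, 1 / ((k : ℝ) + 1) ^ 3

/-!
Put `x = (1 + z) / 2` and `F x = 12 Li₃ x - 6 log x Li₂ x - π² log x - 12 ζ(3)`, so that the
function to differentiate is `2 x F x`. From `Li₃' = Li₂ / x` and `Li₂' = -log (1 - x) / x` one gets
`x F' x = 6 (Li₂ x + log x log (1 - x) - π² / 6)`, which is `-6 Li₂ (1 - x)` by Euler's reflection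
formula. The product rule then gives `d/dz (2 x F x) = F x + x F' x`.

For the reflection formula, `Li₂ x + Li₂ (1 - x) + log x log (1 - x)` has derivative `0` on `(0, 1)`
and tends to `Li₂ 1 = ζ(2)` at `0`.
-/

theorem norm_pow_div_add_one_pow (x : ℝ) (m k s : ℕ) :
    ‖x ^ m / ((k : ℝ) + 1) ^ s‖ = |x| ^ m / ((k : ℝ) + 1) ^ s := by
  rw [norm_div, norm_pow, norm_eq_abs, norm_of_nonneg (by positivity)]

theorem Li_zero_right (s : ℕ) : Li s 0 = 0 := by
  simp [Li]

theorem Li_one_left {x : ℝ} (hx : |x| < 1) : Li 1 x = -log (1 - x) := by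
  simpa [Li] using (hasSum_pow_div_log_of_abs_lt_one hx).tsum_eq

theorem Li_two_one : Li 2 1 = π ^ 2 / 6 := by
  simpa [Li] using ((hasSum_nat_add_iff' 1).mpr hasSum_zeta_two).tsum_eq

theorem continuousOn_Li {s : ℕ} (hs : 2 ≤ s) : ContinuousOn (Li s) (Set.Icc (-1) 1) := by
  have hsum : Summable fun k : ℕ => 1 / ((k : ℝ) + 1) ^ s := by
    simpa using (summable_nat_add_iff 1).mpr (summable_one_div_nat_pow.mpr hs)
  refine continuousOn_tsum (fun k => by fun_prop) hsum fun k x hx => ?_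
  rw [norm_pow_div_add_one_pow]
  gcongr
  exact pow_le_one₀ (abs_nonneg x) (abs_le.mpr hx)

theorem hasDerivAt_Li_succ_tsum (s : ℕ) {x : ℝ} (hx : |x| < 1) :
    HasDerivAt (Li (s + 1)) (∑' k : ℕ, x ^ k / ((k : ℝ) + 1) ^ s) x := by
  obtain ⟨r, hxr, hr⟩ := exists_between hx
  have hr0 : 0 < r := (abs_nonneg x).trans_lt hxr
  refine hasDerivAt_tsum_of_isPreconnected
    (g := fun (k : ℕ) (y : ℝ) => y ^ (k + 1) / ((k : ℝ) + 1) ^ (s + 1))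
    (g' := fun (k : ℕ) (y : ℝ) => y ^ k / ((k : ℝ) + 1) ^ s)
    (summable_geometric_of_lt_one hr0.le hr) isOpen_Ioo isPreconnected_Ioo
    (fun k y _ => ?termDeriv) (fun k y hy => ?termBound)
    (⟨neg_lt_zero.mpr hr0, hr0⟩ : (0 : ℝ) ∈ Set.Ioo (-r) r) (by simp) (abs_lt.mp hxr)
  case termDeriv =>
    refine ((hasDerivAt_pow (k + 1) y).div_const (((k : ℝ) + 1) ^ (s + 1))).congr_deriv ?_
    push_cast
    field_simp
    ring
  case termBound =>
    have hk : (1 : ℝ) ≤ ((k : ℝ) + 1) ^ s := one_le_pow₀ (by simp)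
    calc ‖y ^ k / ((k : ℝ) + 1) ^ s‖ = |y| ^ k / ((k : ℝ) + 1) ^ s :=
          norm_pow_div_add_one_pow y k k s
      _ ≤ |y| ^ k := div_le_self (by positivity) hk
      _ ≤ r ^ k := by gcongr; exact (abs_lt.mpr hy).le

theorem hasDerivAt_Li_succ (s : ℕ) {x : ℝ} (hx : |x| < 1) (hx0 : x ≠ 0) :
    HasDerivAt (Li (s + 1)) (Li s x / x) x := by
  refine (hasDerivAt_Li_succ_tsum s hx).congr_deriv ?_
  rw [Li, ← tsum_div_const]
  refine tsum_congr fun k => ?_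
  rw [pow_succ]
  field_simp

theorem hasDerivAt_Li_two {x : ℝ} (hx : |x| < 1) (hx0 : x ≠ 0) :
    HasDerivAt (Li 2) (-log (1 - x) / x) x := by
  simpa only [Li_one_left hx] using hasDerivAt_Li_succ 1 hx hx0

-- The zero of `f` absorbs the singularity of `log`: `log x * f x = (x * log x) * (f x / x)`.
theorem continuousAt_log_mul_of_differentiableAt {f : ℝ → ℝ} (hf : DifferentiableAt ℝ f 0)
    (hf0 : f 0 = 0) : ContinuousAt (fun x => log x * f x) 0 := by
  have hfactor : (fun x => log x * f x) = fun x => x * log x * dslope f 0 x := by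
    funext x
    have hslope : x * dslope f 0 x = f x := by simpa [hf0] using sub_smul_dslope f 0 x
    rw [← hslope]
    ring
  rw [hfactor]
  exact continuous_mul_log.continuousAt.mul (continuousAt_dslope_same.mpr hf)

-- At `0` the junk value `log 0 = 0` agrees with the limit of `log x * log (1 - x)`.
theorem continuousOn_log_mul_log_one_sub :
    ContinuousOn (fun x => log x * log (1 - x)) (Set.Iio 1) := by
  intro x hx
  have hx1 : 1 - x ≠ 0 := (sub_pos.mpr hx).ne'
  refine ContinuousAt.continuousWithinAt ?_
  rcases eq_or_ne x 0 with rfl | hx0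
  · exact continuousAt_log_mul_of_differentiableAt (by fun_prop (disch := exact hx1)) (by simp)
  · fun_prop (disch := assumption)

theorem hasDerivAt_Li_two_reflection {x : ℝ} (hx0 : 0 < x) (hx1 : x < 1) :
    HasDerivAt (fun y => Li 2 y + Li 2 (1 - y) + log y * log (1 - y)) 0 x := by
  have hx1' : 0 < 1 - x := sub_pos.mpr hx1
  have hsub : HasDerivAt (fun y : ℝ => 1 - y) (-1) x := (hasDerivAt_id x).const_sub 1
  have hLi : HasDerivAt (Li 2) (-log (1 - x) / x) x :=
    hasDerivAt_Li_two (abs_lt.mpr ⟨by linarith, hx1⟩) hx0.ne'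
  have hLi_sub : HasDerivAt (fun y => Li 2 (1 - y)) (-log x / (1 - x) * -1) x := by
    have h := hasDerivAt_Li_two (abs_lt.mpr ⟨by linarith, by linarith⟩) hx1'.ne'
    rw [sub_sub_cancel] at h
    exact h.comp x hsub
  refine ((hLi.add hLi_sub).add ((hasDerivAt_log hx0.ne').mul (hsub.log hx1'.ne'))).congr_deriv ?_
  field_simp
  ring

theorem continuousOn_Li_two_reflection :
    ContinuousOn (fun y => Li 2 y + Li 2 (1 - y) + log y * log (1 - y)) (Set.Ico 0 1) := by
  have hLi := continuousOn_Li le_rfl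
  refine ((hLi.mono fun y hy => ?_).add (hLi.comp (by fun_prop) fun y hy => ?_)).add
    (continuousOn_log_mul_log_one_sub.mono fun y hy => hy.2)
  · exact ⟨by linarith [hy.1], hy.2.le⟩
  · exact ⟨by linarith [hy.2], by linarith [hy.1]⟩

theorem Li_two_add_Li_two_one_sub {x : ℝ} (hx0 : 0 < x) (hx1 : x < 1) :
    Li 2 x + Li 2 (1 - x) = π ^ 2 / 6 - log x * log (1 - x) := by
  obtain ⟨c, -, hslope⟩ := exists_hasDerivAt_eq_slope _ (fun _ => 0) hx0
    (continuousOn_Li_two_reflection.mono (Set.Icc_subset_Ico_right hx1))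
    fun y hy => hasDerivAt_Li_two_reflection hy.1 (hy.2.trans hx1)
  have hconst := (div_eq_zero_iff.mp hslope.symm).resolve_right (sub_pos.mpr hx0).ne'
  simp only [sub_zero, log_zero, zero_mul, Li_zero_right, Li_two_one] at hconst
  linarith

theorem hasDerivAt_two_mul_Li_three_sub_log_mul {x : ℝ} (hx0 : 0 < x) (hx1 : x < 1) :
    HasDerivAt (fun y => 2 * Li 3 y - log y * Li 2 y - π ^ 2 / 6 * log y)
      (-Li 2 (1 - x) / x) x := by
  have hx : |x| < 1 := abs_lt.mpr ⟨by linarith, hx1⟩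
  have hlog := hasDerivAt_log hx0.ne'
  refine ((((hasDerivAt_Li_succ 2 hx hx0.ne').const_mul 2).sub
    (hlog.mul (hasDerivAt_Li_two hx hx0.ne'))).sub (hlog.const_mul (π ^ 2 / 6))).congr_deriv ?_
  rw [eq_sub_of_add_eq' (Li_two_add_Li_two_one_sub hx0 hx1)]
  field_simp
  ring

theorem stmt_0 (z : ℝ) (h1 : -1 < z) (h2 : z < 1) :
    HasDerivAt (fun z : ℝ => (z + 1) *
      (12 * Li 3 ((1 + z) / 2) - 6 * Real.log ((1 + z) / 2) * Li 2 ((1 + z) / 2)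
        - π ^ 2 * Real.log ((1 + z) / 2) - 12 * zeta3))
      (12 * Li 3 ((1 + z) / 2) - 6 * Real.log ((1 + z) / 2) * Li 2 ((1 + z) / 2)
        - π ^ 2 * Real.log ((1 + z) / 2) - 12 * zeta3 - 6 * Li 2 ((1 - z) / 2)) z := by
  have hmid : HasDerivAt (fun w : ℝ => (1 + w) / 2) (1 / 2) z :=
    ((hasDerivAt_id z).const_add 1).div_const 2
  have houter := hasDerivAt_two_mul_Li_three_sub_log_mul
    (x := (1 + z) / 2) (by linarith) (by linarith)
  have hreflect : 1 - (1 + z) / 2 = (1 - z) / 2 := by ring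
  rw [hreflect] at houter
  have hinner := ((houter.comp z hmid).const_mul 6).sub_const (12 * zeta3)
  have hz : 1 + z ≠ 0 := by linarith
  convert! ((hasDerivAt_id z).add_const 1).mul hinner using 1
  · funext w
    simp only [Pi.mul_apply, Function.comp_apply, id]
    ring
  · simp only [Function.comp_apply, id]
    field_simp
    ring
end

section
/- The improper integral ∫₀¹ ln(t)·Li₂(t)/(1−t) dt converges and equals −π⁴/120. -/
open Real

/-!
Multiplying the power series of `Li s` by the geometric series writes `Li s t / (1 - t)` as the sum
of `t ^ (n - 1) / m ^ s` over integers `1 ≤ m < n`. Since `∫₀¹ tⁿ⁻¹ log t dt = -1/n²`, termwise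
integration against `log` gives `-ζ(s, 2)`, where `ζ(s, t) = ∑_{1 ≤ m < n} m⁻ˢ n⁻ᵗ`. Splitting
`ζ(s) ζ(t)` along `m < n`, `m > n` and `m = n` yields Euler's relation
`ζ(s, t) + ζ(t, s) + ζ(s + t) = ζ(s) ζ(t)`, so `2 ζ(2, 2) = (π²/6)² - π⁴/90`.
-/

open Filter MeasureTheory Set
open scoped ENNReal

section TermwiseIntegration

variable {α ι E : Type*} [MeasurableSpace α] {μ : Measure α} [Countable ι] [NormedAddCommGroup E]

lemma integrable_of_hasSum_of_summable_integral_norm {F : ι → α → E} {f : α → E}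
    (hF_int : ∀ i, Integrable (F i) μ) (hF_sum : Summable fun i ↦ ∫ a, ‖F i a‖ ∂μ)
    (hf : ∀ᵐ a ∂μ, HasSum (F · a) (f a)) : Integrable f μ := by
  have hf_meas : AEStronglyMeasurable f μ := by
    refine aestronglyMeasurable_of_tendsto_ae atTop (f := fun s a ↦ ∑ i ∈ s, F i a)
      (fun s ↦ ?_) hf
    exact (integrable_finsetSum s fun i _ ↦ hF_int i).aestronglyMeasurable
  refine ⟨hf_meas, ?_⟩
  calc ∫⁻ a, ‖f a‖ₑ ∂μ
      ≤ ∫⁻ a, ∑' i, ‖F i a‖ₑ ∂μ := by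
        refine lintegral_mono_ae (hf.mono fun a ha ↦ ?_)
        rw [← ha.tsum_eq]
        exact enorm_tsum_le_tsum_enorm
    _ = ∑' i, ∫⁻ a, ‖F i a‖ₑ ∂μ := lintegral_tsum fun i ↦ (hF_int i).aestronglyMeasurable.enorm
    _ = ∑' i, ENNReal.ofReal (∫ a, ‖F i a‖ ∂μ) :=
        tsum_congr fun i ↦ (ofReal_integral_norm_eq_lintegral_enorm (hF_int i)).symm
    _ < ∞ := hF_sum.tsum_ofReal_lt_top

end TermwiseIntegration

section LogMoments

variable {r : ℝ}

/-- The primitive comes from the substitution `u = t ^ (r + 1)`, which turns `t ^ r * log t` into a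
multiple of `log u`. -/
lemma hasDerivAt_rpow_mul_log_rpow_sub_rpow (hr : r + 1 ≠ 0) {t : ℝ} (ht : 0 < t) :
    HasDerivAt (fun x ↦ (x ^ (r + 1) * log (x ^ (r + 1)) - x ^ (r + 1)) / (r + 1) ^ 2)
      (t ^ r * log t) t := by
  have hu : HasDerivAt (fun x : ℝ ↦ x ^ (r + 1)) ((r + 1) * t ^ r) t := by
    simpa only [add_sub_cancel_right] using hasDerivAt_rpow_const (p := r + 1) (Or.inl ht.ne')
  have hlog := (hasDerivAt_mul_log (rpow_pos_of_pos ht (r + 1)).ne').comp t hu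
  convert! (hlog.sub hu).div_const ((r + 1) ^ 2) using 1
  rw [log_rpow ht]
  field_simp
  ring

lemma continuous_rpow_mul_log_rpow_sub_rpow (hr : -1 < r) :
    Continuous fun x : ℝ ↦
      (x ^ (r + 1) * log (x ^ (r + 1)) - x ^ (r + 1)) / (r + 1) ^ 2 := by
  have hu : Continuous fun x : ℝ ↦ x ^ (r + 1) := continuous_rpow_const (by linarith)
  exact (hu.mul_log.sub hu).div_const _

lemma rpow_mul_log_nonpos {t : ℝ} (ht : t ∈ Ioo (0 : ℝ) 1) : t ^ r * log t ≤ 0 :=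
  mul_nonpos_of_nonneg_of_nonpos (rpow_nonneg ht.1.le r) (log_nonpos ht.1.le ht.2.le)

lemma intervalIntegrable_rpow_mul_log (hr : -1 < r) :
    IntervalIntegrable (fun t ↦ t ^ r * log t) volume 0 1 := by
  rw [← neg_neg (fun t ↦ t ^ r * log t)]
  refine (intervalIntegral.intervalIntegrable_deriv_of_nonneg
    (continuous_rpow_mul_log_rpow_sub_rpow hr).neg.continuousOn ?_ ?_).neg
  all_goals
    rw [min_eq_left zero_le_one, max_eq_right zero_le_one]
    intro t ht
  · exact (hasDerivAt_rpow_mul_log_rpow_sub_rpow (by linarith) ht.1).neg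
  · exact neg_nonneg.2 (rpow_mul_log_nonpos ht)

lemma integral_rpow_mul_log (hr : -1 < r) :
    ∫ t in (0 : ℝ)..1, t ^ r * log t = -(1 / (r + 1) ^ 2) := by
  have hr' : r + 1 ≠ 0 := by linarith
  rw [intervalIntegral.integral_eq_sub_of_hasDerivAt_of_le zero_le_one
    (continuous_rpow_mul_log_rpow_sub_rpow hr).continuousOn
    (fun t ht ↦ hasDerivAt_rpow_mul_log_rpow_sub_rpow hr' ht.1)
    (intervalIntegrable_rpow_mul_log hr)]
  simp [zero_rpow hr', neg_div]

lemma integral_norm_rpow_mul_log (hr : -1 < r) :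
    ∫ t in Ioo (0 : ℝ) 1, ‖t ^ r * log t‖ = 1 / (r + 1) ^ 2 := by
  rw [setIntegral_congr_fun measurableSet_Ioo fun t ht ↦ norm_of_nonpos (rpow_mul_log_nonpos ht),
    integral_neg, ← integral_Ioc_eq_integral_Ioo, ← intervalIntegral.integral_of_le zero_le_one,
    integral_rpow_mul_log hr, neg_neg]

end LogMoments

section LogSeries

variable {ι : Type*} [Countable ι] {c r : ι → ℝ} {f : ℝ → ℝ}

lemma intervalIntegrable_log_mul_and_hasSum_integral (hr : ∀ i, -1 < r i)
    (hc : Summable fun i ↦ |c i| / (r i + 1) ^ 2)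
    (hf : ∀ t ∈ Ioo (0 : ℝ) 1, HasSum (fun i ↦ c i * t ^ r i) (f t)) :
    IntervalIntegrable (fun t ↦ log t * f t) volume 0 1 ∧
      HasSum (fun i ↦ -(c i / (r i + 1) ^ 2)) (∫ t in (0 : ℝ)..1, log t * f t) := by
  have hF_int (i : ι) : IntegrableOn (fun t ↦ c i * (t ^ r i * log t)) (Ioo 0 1) :=
    (intervalIntegrable_iff_integrableOn_Ioo_of_le zero_le_one).1
      ((intervalIntegrable_rpow_mul_log (hr i)).const_mul _)
  have hF_val (i : ι) :
      ∫ t in Ioo (0 : ℝ) 1, c i * (t ^ r i * log t) = -(c i / (r i + 1) ^ 2) := by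
    rw [← integral_Ioc_eq_integral_Ioo, ← intervalIntegral.integral_of_le zero_le_one,
      intervalIntegral.integral_const_mul, integral_rpow_mul_log (hr i), mul_neg, mul_one_div]
  have hF_norm : Summable fun i ↦ ∫ t in Ioo (0 : ℝ) 1, ‖c i * (t ^ r i * log t)‖ := by
    simpa only [norm_mul (c _), norm_eq_abs (c _), integral_const_mul,
      integral_norm_rpow_mul_log (hr _), mul_one_div] using hc
  have hF_sum : ∀ t ∈ Ioo (0 : ℝ) 1,
      HasSum (fun i ↦ c i * (t ^ r i * log t)) (log t * f t) := fun t ht ↦ by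
    simpa only [mul_assoc, mul_comm (log t)] using (hf t ht).mul_right (log t)
  constructor
  · rw [intervalIntegrable_iff_integrableOn_Ioo_of_le zero_le_one]
    exact integrable_of_hasSum_of_summable_integral_norm hF_int hF_norm
      (ae_restrict_of_forall_mem measurableSet_Ioo hF_sum)
  · have h := hasSum_integral_of_summable_integral_norm hF_int hF_norm
    rwa [funext hF_val, setIntegral_congr_fun measurableSet_Ioo fun t ht ↦ (hF_sum t ht).tsum_eq,
      ← integral_Ioc_eq_integral_Ioo, ← intervalIntegral.integral_of_le zero_le_one] at h

end LogSeries

section DiagonalSplitting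

lemma bijective_lt_gt_diag : Function.Bijective
    (Sum.elim (Sum.elim (fun p ↦ (p.1, p.1 + p.2 + 1)) (fun p ↦ (p.1 + p.2 + 1, p.1)))
      (fun k ↦ (k, k)) : ((ℕ × ℕ) ⊕ (ℕ × ℕ)) ⊕ ℕ → ℕ × ℕ) := by
  constructor
  · rintro ((⟨i, j⟩ | ⟨i, j⟩) | i) ((⟨k, l⟩ | ⟨k, l⟩) | k) h <;>
      simp only [Sum.elim_inl, Sum.elim_inr, Prod.mk.injEq, Sum.inl.injEq, Sum.inr.injEq,
        reduceCtorEq] at h ⊢ <;> omega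
  · rintro ⟨i, j⟩
    rcases lt_trichotomy i j with h | rfl | h
    · have hj : i + (j - i - 1) + 1 = j := by omega
      exact ⟨.inl (.inl (i, j - i - 1)), Prod.ext rfl hj⟩
    · exact ⟨.inr i, rfl⟩
    · have hi : j + (i - j - 1) + 1 = i := by omega
      exact ⟨.inl (.inr (j, i - j - 1)), Prod.ext hi rfl⟩

lemma hasSum_nat_prod_of_lt_gt_diag {M : Type*} [AddCommMonoid M] [TopologicalSpace M]
    [ContinuousAdd M] {F : ℕ × ℕ → M} {a b c : M}
    (hlt : HasSum (fun p : ℕ × ℕ ↦ F (p.1, p.1 + p.2 + 1)) a)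
    (hgt : HasSum (fun p : ℕ × ℕ ↦ F (p.1 + p.2 + 1, p.1)) b)
    (hdiag : HasSum (fun k ↦ F (k, k)) c) : HasSum F (a + b + c) :=
  (Equiv.ofBijective _ bijective_lt_gt_diag).hasSum_iff.1 ((hlt.sum hgt).sum hdiag)

end DiagonalSplitting

section DoubleZeta

/-- The term `1 / (m ^ s * n ^ t)` of the double zeta series, for `m = p.1 + 1` and
`n = p.1 + p.2 + 2`: the pairs of integers `1 ≤ m < n` are indexed by `m - 1` and the number of
integers strictly between `m` and `n`. -/
noncomputable def doubleZetaTerm (s t : ℕ) (p : ℕ × ℕ) : ℝ :=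
  1 / (((p.1 : ℝ) + 1) ^ s * ((p.1 : ℝ) + p.2 + 2) ^ t)

/-- Euler's double zeta value `∑_{1 ≤ m < n} 1 / (m ^ s * n ^ t)`. Many authors write the exponent
of the larger variable first and call this `ζ(t, s)`. -/
noncomputable def doubleZeta (s t : ℕ) : ℝ := ∑' p, doubleZetaTerm s t p

variable {s t : ℕ}

/-- In the borderline case `s = 1`, `t = 2` the total exponent `3` is shared equally between `m` and
`d`, so that both resulting single series still converge. -/
lemma rpow_mul_rpow_le_pow_mul_add_pow (hs : 1 ≤ s) (ht : 2 ≤ t) {m d : ℝ} (hm : 1 ≤ m)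
    (hd : 0 ≤ d) : m ^ (3 / 2 : ℝ) * d ^ (3 / 2 : ℝ) ≤ m ^ s * (m + d) ^ t :=
  calc m ^ (3 / 2 : ℝ) * d ^ (3 / 2 : ℝ)
      = m * (m ^ (1 / 2 : ℝ) * d ^ (3 / 2 : ℝ)) := by
        rw [← mul_assoc, ← rpow_one_add' (by positivity) (by norm_num)]
        norm_num
    _ ≤ m * ((m + d) ^ (1 / 2 : ℝ) * (m + d) ^ (3 / 2 : ℝ)) := by gcongr <;> linarith
    _ = m ^ 1 * (m + d) ^ 2 := by
        rw [← rpow_add (by positivity), pow_one, ← rpow_natCast]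
        norm_num
    _ ≤ m ^ s * (m + d) ^ t := by
        gcongr
        linarith

lemma summable_doubleZetaTerm (hs : 1 ≤ s) (ht : 2 ≤ t) : Summable (doubleZetaTerm s t) := by
  have hpow : Summable fun k : ℕ ↦ 1 / ((k : ℝ) + 1) ^ (3 / 2 : ℝ) :=
    ((summable_one_div_nat_add_rpow 1 (3 / 2)).2 (by norm_num)).congr fun k ↦ by
      rw [abs_of_pos (by positivity)]
  refine Summable.of_nonneg_of_le (fun p ↦ by unfold doubleZetaTerm; positivity) (fun p ↦ ?_)
    (hpow.mul_of_nonneg hpow (fun _ ↦ by positivity) fun _ ↦ by positivity)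
  have hn : (p.1 : ℝ) + p.2 + 2 = (p.1 + 1) + (p.2 + 1) := by ring
  rw [doubleZetaTerm, hn, div_mul_div_comm, one_mul]
  exact one_div_le_one_div_of_le (by positivity)
    (rpow_mul_rpow_le_pow_mul_add_pow hs ht (by simp) (by positivity))

lemma hasSum_one_div_succ_pow (hs : 2 ≤ s) :
    HasSum (fun k : ℕ ↦ 1 / ((k : ℝ) + 1) ^ s) (∑' n : ℕ, 1 / (n : ℝ) ^ s) := by
  have h := (hasSum_nat_add_iff' 1).2 (summable_one_div_nat_pow.2 hs).hasSum
  simpa [zero_pow (by omega : s ≠ 0)] using h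

/-- The single sums start at `n = 0`, where `1 / 0 ^ s` is `0`. -/
lemma doubleZeta_add_doubleZeta_swap_add_zeta (hs : 2 ≤ s) (ht : 2 ≤ t) :
    doubleZeta s t + doubleZeta t s + ∑' n : ℕ, 1 / (n : ℝ) ^ (s + t) =
      (∑' n : ℕ, 1 / (n : ℝ) ^ s) * ∑' n : ℕ, 1 / (n : ℝ) ^ t := by
  let F : ℕ × ℕ → ℝ := fun p ↦ 1 / ((p.1 : ℝ) + 1) ^ s * (1 / ((p.2 : ℝ) + 1) ^ t)
  have hlt : HasSum (fun p : ℕ × ℕ ↦ F (p.1, p.1 + p.2 + 1)) (doubleZeta s t) := by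
    refine (summable_doubleZetaTerm (by omega) ht).hasSum.congr_fun fun p ↦ ?_
    simp only [F, doubleZetaTerm]
    push_cast
    ring
  have hgt : HasSum (fun p : ℕ × ℕ ↦ F (p.1 + p.2 + 1, p.1)) (doubleZeta t s) := by
    refine (summable_doubleZetaTerm (by omega) hs).hasSum.congr_fun fun p ↦ ?_
    simp only [F, doubleZetaTerm]
    push_cast
    ring
  have hdiag : HasSum (fun k ↦ F (k, k)) (∑' n : ℕ, 1 / (n : ℝ) ^ (s + t)) := by
    simpa only [F, div_mul_div_comm, one_mul, ← pow_add] using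
      hasSum_one_div_succ_pow (s := s + t) (by omega)
  have hζs := hasSum_one_div_succ_pow hs
  have hζt := hasSum_one_div_succ_pow ht
  exact (hasSum_nat_prod_of_lt_gt_diag hlt hgt hdiag).unique <| hζs.mul hζt <|
    hζs.summable.mul_of_nonneg hζt.summable (fun _ ↦ by positivity) fun _ ↦ by positivity

lemma doubleZeta_two_two : doubleZeta 2 2 = π ^ 4 / 120 := by
  have h := doubleZeta_add_doubleZeta_swap_add_zeta le_rfl le_rfl
  rw [hasSum_zeta_two.tsum_eq, hasSum_zeta_four.tsum_eq] at h
  linarith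

end DoubleZeta

section Polylogarithm

lemma summable_norm_pow_succ_div_succ_pow (s : ℕ) {t : ℝ} (ht : |t| < 1) :
    Summable fun k : ℕ ↦ ‖t ^ (k + 1) / ((k : ℝ) + 1) ^ s‖ := by
  refine Summable.of_nonneg_of_le (fun _ ↦ norm_nonneg _) (fun k ↦ ?_)
    ((summable_nat_add_iff 1).2 (summable_geometric_of_lt_one (abs_nonneg t) ht))
  have hk : (1 : ℝ) ≤ (k + 1 : ℝ) ^ s := one_le_pow₀ (by simp)
  rw [norm_div, norm_pow, norm_eq_abs, norm_of_nonneg (by positivity)]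
  exact div_le_self (by positivity) hk

lemma hasSum_Li_div_one_sub (s : ℕ) {t : ℝ} (ht : |t| < 1) :
    HasSum (fun p : ℕ × ℕ ↦ 1 / ((p.1 : ℝ) + 1) ^ s * t ^ (p.1 + p.2 + 1)) (Li s t / (1 - t)) := by
  have hLi := summable_norm_pow_succ_div_succ_pow s ht
  have hgeom := summable_norm_geometric_of_norm_lt_one (r := t) ht
  have h := hLi.of_norm.hasSum.mul (hasSum_geometric_of_norm_lt_one ht)
    (summable_mul_of_summable_norm hLi hgeom)
  refine h.congr_fun fun p ↦ ?_
  ring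

theorem intervalIntegrable_and_integral_log_mul_Li_div_one_sub {s : ℕ} (hs : 1 ≤ s) :
    IntervalIntegrable (fun t ↦ log t * Li s t / (1 - t)) volume 0 1 ∧
      ∫ t in (0 : ℝ)..1, log t * Li s t / (1 - t) = -doubleZeta s 2 := by
  have hsum := (summable_doubleZetaTerm hs le_rfl).hasSum
  have hterm (p : ℕ × ℕ) : 1 / ((p.1 : ℝ) + 1) ^ s / (((p.1 + p.2 + 1 : ℕ) : ℝ) + 1) ^ 2 =
      doubleZetaTerm s 2 p := by
    rw [doubleZetaTerm, div_div]
    push_cast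
    ring
  obtain ⟨hint, hval⟩ := intervalIntegrable_log_mul_and_hasSum_integral
    (c := fun p : ℕ × ℕ ↦ 1 / ((p.1 : ℝ) + 1) ^ s) (r := fun p ↦ ((p.1 + p.2 + 1 : ℕ) : ℝ))
    (f := fun t ↦ Li s t / (1 - t))
    (fun p ↦ neg_one_lt_zero.trans_le (Nat.cast_nonneg _))
    (hsum.summable.congr fun p ↦ by rw [abs_of_nonneg (by positivity), hterm])
    (fun t ht ↦ by
      simpa only [rpow_natCast] using
        hasSum_Li_div_one_sub s (abs_lt.2 ⟨neg_one_lt_zero.trans ht.1, ht.2⟩))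
  simp only [hterm, ← mul_div_assoc] at hint hval
  exact ⟨hint, hval.unique hsum.neg⟩

end Polylogarithm

theorem stmt_12 :
    IntervalIntegrable (fun t : ℝ => Real.log t * Li 2 t / (1 - t)) MeasureTheory.volume 0 1 ∧
    ∫ t in (0 : ℝ)..1, Real.log t * Li 2 t / (1 - t) = -π ^ 4 / 120 := by
  rw [neg_div, ← doubleZeta_two_two]
  exact intervalIntegrable_and_integral_log_mul_Li_div_one_sub one_le_two
end

section
/- The double series ∑_{k=1}^∞ (1/k²)·(∑_{j=k+1}^∞ 1/j²) converges and equals π⁴/120; equivalently, ∑_{k=1}^∞ Ψ′(k+1)/k² = π⁴/120, where Ψ′(k+1) = ∑_{j=1}^∞ 1/(k+j)² is the trigamma function at k+1. -/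
open Real

/-!
Let `F n` and `G n` be the tails from index `n` on of two absolutely convergent series `∑ f`, `∑ g`.
Expanding `F n * G n = (f n + F (n + 1)) * (g n + G (n + 1))` and telescoping expresses
`(∑ f) * (∑ g)` through the diagonal sum `∑ f n * g n` and the two sums over ordered pairs of
indices. For `f n = g n = 1 / (n + 1) ^ 2` this is `ζ(2) ^ 2 = ζ(4) + 2 ζ(2, 2)`.
-/

section Tails

open Filter Topology

variable {R : Type*}

theorem tsum_nat_add_eq_add_tsum_nat_add_succ [AddCommGroup R] [TopologicalSpace R]
    [IsTopologicalAddGroup R] [T2Space R] {f : ℕ → R} (hf : Summable f) (n : ℕ) :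
    ∑' j, f (j + n) = f n + ∑' j, f (j + (n + 1)) := by
  rw [((summable_nat_add_iff n).2 hf).tsum_eq_zero_add]
  simp only [zero_add, add_assoc, add_comm 1 n]

theorem tsum_sub_succ_of_tendsto [AddCommGroup R] [TopologicalSpace R] [IsTopologicalAddGroup R]
    [T2Space R] {u : ℕ → R} {c : R} (hu : Tendsto u atTop (𝓝 c))
    (hsum : Summable fun n => u n - u (n + 1)) : ∑' n, (u n - u (n + 1)) = u 0 - c := by
  refine tendsto_nhds_unique hsum.hasSum.tendsto_sum_nat ?_
  simpa only [Finset.sum_range_sub'] using hu.const_sub (u 0)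

theorem tendsto_tsum_nat_add_succ [AddCommGroup R] [TopologicalSpace R] [IsTopologicalAddGroup R]
    [T2Space R] (f : ℕ → R) : Tendsto (fun n => ∑' j, f (j + (n + 1))) atTop (𝓝 0) :=
  (tendsto_sum_nat_add f).comp (tendsto_add_atTop_nat 1)

variable [NormedRing R] [CompleteSpace R] {f g u : ℕ → R} {c : R}

theorem summable_mul_of_summable_norm_of_tendsto (hf : Summable fun n => ‖f n‖)
    (hu : Tendsto u atTop (𝓝 c)) : Summable fun n => f n * u n :=
  summable_of_isBigO_nat hf <| by
    simpa only [mul_one] using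
      (Asymptotics.isBigO_refl f atTop).norm_right.mul (hu.isBigO_one ℝ)

theorem summable_mul_of_tendsto_of_summable_norm (hu : Tendsto u atTop (𝓝 c))
    (hf : Summable fun n => ‖f n‖) : Summable fun n => u n * f n :=
  summable_of_isBigO_nat hf <| by
    simpa only [one_mul] using
      (hu.isBigO_one ℝ).mul (Asymptotics.isBigO_refl f atTop).norm_right

theorem summable_mul_tsum_nat_add_succ (hf : Summable fun n => ‖f n‖) (g : ℕ → R) :
    Summable fun n => f n * ∑' j, g (j + (n + 1)) :=
  summable_mul_of_summable_norm_of_tendsto hf (tendsto_tsum_nat_add_succ g)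

theorem summable_tsum_nat_add_succ_mul (f : ℕ → R) (hg : Summable fun n => ‖g n‖) :
    Summable fun n => (∑' j, f (j + (n + 1))) * g n :=
  summable_mul_of_tendsto_of_summable_norm (tendsto_tsum_nat_add_succ f) hg

theorem tsum_mul_tsum_eq_tsum_mul_add_tsum_mul_tails (hf : Summable fun n => ‖f n‖)
    (hg : Summable fun n => ‖g n‖) :
    (∑' n, f n) * ∑' n, g n = ∑' n, f n * g n + ∑' n, f n * ∑' j, g (j + (n + 1)) +
      ∑' n, (∑' j, f (j + (n + 1))) * g n := by
  let tailProd (n : ℕ) : R := (∑' j, f (j + n)) * ∑' j, g (j + n)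
  have tailProd_sub_succ (n : ℕ) : tailProd n - tailProd (n + 1) =
      f n * g n + f n * ∑' j, g (j + (n + 1)) + (∑' j, f (j + (n + 1))) * g n := by
    simp only [tailProd, tsum_nat_add_eq_add_tsum_nat_add_succ hf.of_norm n,
      tsum_nat_add_eq_add_tsum_nat_add_succ hg.of_norm n]
    noncomm_ring
  have tailProd_tendsto : Tendsto tailProd atTop (𝓝 0) := by
    simpa only [mul_zero] using (tendsto_sum_nat_add f).mul (tendsto_sum_nat_add g)
  have diagonal := summable_mul_of_summable_norm_of_tendsto hf hg.of_norm.tendsto_atTop_zero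
  have upper := summable_mul_tsum_nat_add_succ hf g
  have lower := summable_tsum_nat_add_succ_mul f hg
  have telescope := tsum_sub_succ_of_tendsto tailProd_tendsto <| by
    simpa only [tailProd_sub_succ] using (diagonal.add upper).add lower
  simpa only [tailProd_sub_succ, (diagonal.add upper).tsum_add lower, diagonal.tsum_add upper,
    tailProd, add_zero, sub_zero] using telescope.symm

end Tails

theorem two_mul_tsum_mul_tsum_nat_add_succ {R : Type*} [NormedCommRing R] [CompleteSpace R]
    {f : ℕ → R} (hf : Summable fun n => ‖f n‖) :
    2 * ∑' n, f n * ∑' j, f (j + (n + 1)) = (∑' n, f n) ^ 2 - ∑' n, f n ^ 2 := by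
  have square := tsum_mul_tsum_eq_tsum_mul_add_tsum_mul_tails hf hf
  simp only [mul_comm (∑' j, f (j + _)), ← sq] at square
  rw [square]
  ring

theorem hasSum_one_div_nat_add_one_sq :
    HasSum (fun n : ℕ => 1 / ((n : ℝ) + 1) ^ 2) (π ^ 2 / 6) := by
  simpa using (hasSum_nat_add_iff' 1).2 hasSum_zeta_two

theorem hasSum_one_div_nat_add_one_pow_four :
    HasSum (fun n : ℕ => 1 / ((n : ℝ) + 1) ^ 4) (π ^ 4 / 90) := by
  simpa using (hasSum_nat_add_iff' 1).2 hasSum_zeta_four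

theorem stmt_14 :
    Summable (fun k : ℕ =>
      (1 / ((k : ℝ) + 1) ^ 2) * ∑' j : ℕ, 1 / (((k : ℝ) + 1) + 1 + j) ^ 2) ∧
    ∑' k : ℕ, (1 / ((k : ℝ) + 1) ^ 2) * ∑' j : ℕ, 1 / (((k : ℝ) + 1) + 1 + j) ^ 2
      = π ^ 4 / 120 := by
  let f (n : ℕ) : ℝ := 1 / ((n : ℝ) + 1) ^ 2
  have f_shift (k j : ℕ) : 1 / (((k : ℝ) + 1) + 1 + j) ^ 2 = f (j + (k + 1)) := by
    simp only [f]
    push_cast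
    ring
  have f_sq (n : ℕ) : f n ^ 2 = 1 / ((n : ℝ) + 1) ^ 4 := by
    simp only [f, div_pow, one_pow, ← pow_mul]
  have f_summable : Summable fun n => ‖f n‖ := hasSum_one_div_nat_add_one_sq.summable.norm
  have zeta_two : ∑' n, f n = π ^ 2 / 6 := hasSum_one_div_nat_add_one_sq.tsum_eq
  have zeta_four : ∑' n, f n ^ 2 = π ^ 4 / 90 := by
    simpa only [f_sq] using hasSum_one_div_nat_add_one_pow_four.tsum_eq
  simp only [f_shift]
  refine ⟨summable_mul_tsum_nat_add_succ f_summable f, ?_⟩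
  have twice_sum := two_mul_tsum_mul_tsum_nat_add_succ f_summable
  rw [zeta_two, zeta_four] at twice_sum
  linarith
end

section
/- The double series ∑_{k=1}^∞ (1/k²)·(∑_{j=k}^∞ 1/j²) converges and equals 7π⁴/360; equivalently, ∑_{k=1}^∞ Ψ′(k)/k² = 7π⁴/360, where Ψ′(k) = ∑_{j=0}^∞ 1/(k+j)² is the trigamma function at k. -/
open Real

/-!
The terms `f k * g j` with `k ≤ j` and those with `j < k` together make up the product of two
series: removing for each `k` the row `k ≤ j` of the first triangle and the column `k` of the
second turns the product of the `k`-th tails into that of the next ones, so the sum telescopes. For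
`g = f` the two triangles differ only by the diagonal, so the terms `f k * f j` with `k ≤ j` sum to
half of `(∑ f k) ^ 2 + ∑ f k ^ 2`. With `f k = 1 / (k + 1) ^ 2` this is `(ζ(2) ^ 2 + ζ(4)) / 2`.
-/

open Asymptotics Filter Finset Topology

/-- The tail `∑_{j ≥ k} f j` of the series of `f`, with the junk value `0` when the series
diverges. -/
noncomputable def tailSum {M : Type*} [AddCommMonoid M] [TopologicalSpace M] (f : ℕ → M) (k : ℕ) :
    M :=
  ∑' j, f (j + k)

theorem tailSum_zero {M : Type*} [AddCommMonoid M] [TopologicalSpace M] (f : ℕ → M) :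
    tailSum f 0 = ∑' n, f n :=
  rfl

section AddCommGroup

variable {G : Type*} [AddCommGroup G] [TopologicalSpace G] [IsTopologicalAddGroup G] [T2Space G]

theorem tendsto_tailSum (f : ℕ → G) : Tendsto (tailSum f) atTop (𝓝 0) :=
  tendsto_sum_nat_add f

theorem tailSum_eq_add_tailSum_succ {f : ℕ → G} (hf : Summable f) (k : ℕ) :
    tailSum f k = f k + tailSum f (k + 1) := by
  have h := ((summable_nat_add_iff k).2 hf).tsum_eq_zero_add
  simpa only [tailSum, zero_add, add_right_comm, add_assoc] using h

end AddCommGroup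

theorem sum_range_mul_tailSum_add_tailSum_mul {R : Type*} [Ring R] [TopologicalSpace R]
    [IsTopologicalRing R] [T2Space R] {f g : ℕ → R} (hf : Summable f) (hg : Summable g) (n : ℕ) :
    ∑ k ∈ range n, (f k * tailSum g k + tailSum f (k + 1) * g k) =
      (∑' k, f k) * (∑' k, g k) - tailSum f n * tailSum g n := by
  rw [← tailSum_zero f, ← tailSum_zero g, ← sum_range_sub' (fun k ↦ tailSum f k * tailSum g k)]
  refine sum_congr rfl fun k _ ↦ ?_
  rw [tailSum_eq_add_tailSum_succ hf k, tailSum_eq_add_tailSum_succ hg k]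
  noncomm_ring

section NormedRing

variable {R : Type*} [NormedRing R] [CompleteSpace R] {f g : ℕ → R}

theorem summable_mul_tailSum (hf : Summable fun k ↦ ‖f k‖) (g : ℕ → R) :
    Summable fun k ↦ f k * tailSum g k :=
  summable_of_isBigO_nat hf <| by
    simpa only [mul_one] using (isBigO_refl f atTop).norm_right.mul
      ((tendsto_tailSum g).isBigO_one ℝ)

theorem summable_tailSum_succ_mul (f : ℕ → R) (hg : Summable fun k ↦ ‖g k‖) :
    Summable fun k ↦ tailSum f (k + 1) * g k :=
  summable_of_isBigO_nat hg <| by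
    simpa only [one_mul, Function.comp_apply] using
      (((tendsto_tailSum f).comp (tendsto_add_atTop_nat 1)).isBigO_one ℝ).mul
        (isBigO_refl g atTop).norm_right

theorem tsum_mul_tailSum_add_tsum_tailSum_succ_mul (hf : Summable fun k ↦ ‖f k‖)
    (hg : Summable fun k ↦ ‖g k‖) :
    ∑' k, f k * tailSum g k + ∑' k, tailSum f (k + 1) * g k = (∑' k, f k) * ∑' k, g k := by
  have h_upper := summable_mul_tailSum hf g
  have h_lower := summable_tailSum_succ_mul f hg
  have h_partial := (h_upper.add h_lower).tendsto_sum_tsum_nat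
  simp only [sum_range_mul_tailSum_add_tailSum_mul hf.of_norm hg.of_norm] at h_partial
  have h_limit := ((tendsto_tailSum f).mul (tendsto_tailSum g)).const_sub
    ((∑' k, f k) * ∑' k, g k)
  rw [mul_zero, sub_zero] at h_limit
  rw [← h_upper.tsum_add h_lower]
  exact tendsto_nhds_unique h_partial h_limit

end NormedRing

theorem two_mul_tsum_mul_tailSum {R : Type*} [NormedCommRing R] [CompleteSpace R] {f : ℕ → R}
    (hf : Summable fun k ↦ ‖f k‖) :
    2 * ∑' k, f k * tailSum f k = (∑' k, f k) ^ 2 + ∑' k, f k ^ 2 := by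
  have h_diagonal (k : ℕ) : f k ^ 2 = f k * tailSum f k - tailSum f (k + 1) * f k := by
    rw [tailSum_eq_add_tailSum_succ hf.of_norm k]
    ring
  have h_diff : ∑' k, f k ^ 2 = ∑' k, f k * tailSum f k - ∑' k, tailSum f (k + 1) * f k := by
    simp only [h_diagonal]
    exact (summable_mul_tailSum hf f).tsum_sub (summable_tailSum_succ_mul f hf)
  rw [h_diff, sq, ← tsum_mul_tailSum_add_tsum_tailSum_succ_mul hf hf]
  ring

theorem hasSum_one_div_add_one_pow {p : ℕ} (hp : p ≠ 0) {a : ℝ}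
    (h : HasSum (fun n : ℕ ↦ 1 / (n : ℝ) ^ p) a) :
    HasSum (fun n : ℕ ↦ 1 / ((n : ℝ) + 1) ^ p) a := by
  simpa [hp] using (hasSum_nat_add_iff' 1).2 h

theorem stmt_15 :
    Summable (fun k : ℕ =>
      (1 / ((k : ℝ) + 1) ^ 2) * ∑' j : ℕ, 1 / (((k : ℝ) + 1) + j) ^ 2) ∧
    ∑' k : ℕ, (1 / ((k : ℝ) + 1) ^ 2) * ∑' j : ℕ, 1 / (((k : ℝ) + 1) + j) ^ 2
      = 7 * π ^ 4 / 360 := by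
  set f : ℕ → ℝ := fun n ↦ 1 / ((n : ℝ) + 1) ^ 2 with hf
  have h_zeta_two : HasSum f (π ^ 2 / 6) := hasSum_one_div_add_one_pow two_ne_zero hasSum_zeta_two
  have h_zeta_four : HasSum (fun n ↦ f n ^ 2) (π ^ 4 / 90) := by
    simpa only [hf, one_div_pow, ← pow_mul] using
      hasSum_one_div_add_one_pow four_ne_zero hasSum_zeta_four
  have h_tail (k : ℕ) : ∑' j : ℕ, 1 / (((k : ℝ) + 1) + j) ^ 2 = tailSum f k :=
    tsum_congr fun j ↦ by simp only [hf, Nat.cast_add]; ring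
  have h_norm : Summable fun n ↦ ‖f n‖ := h_zeta_two.summable.norm
  simp only [h_tail]
  refine ⟨summable_mul_tailSum h_norm f, ?_⟩
  have h_double := two_mul_tsum_mul_tailSum h_norm
  rw [h_zeta_two.tsum_eq, h_zeta_four.tsum_eq] at h_double
  linear_combination h_double / 2
end
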